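/- arXiv:2103.16126 — 3 statements merged into one kernel-verified Lean document; each statement's English description precedes it below -/
import Mathlib

section
/- For every finite Coxeter system (W, S) over a nonempty finite index set B, there exists a special Hamiltonian circuit map: a bijection θ : ℤ/kℤ → W with k = |W| such that θ(t+1)·θ(t)⁻¹ is a simple reflection for every t, and moreover for every index i ∈ B there exists t with θ(t+1) = sᵢ · θ(t). -/
set_option linter.unusedSectionVars false

namespace HamCox

open Polynomial.Chebyshev in
theorem chebS_cos (m : ℕ) (hm : 3 ≤ m) (k : ℤ) :
    (S ℝ k).eval (2 * Real.cos (2 * Real.pi / m)) =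
      Real.sin ((k + 1) * (2 * Real.pi / m)) / Real.sin (2 * Real.pi / m) := by
  have hm' : (3 : ℝ) ≤ m := by exact_mod_cast hm
  have hpos : 0 < Real.sin (2 * Real.pi / m) := by
    apply Real.sin_pos_of_pos_of_lt_pi
    · have := Real.pi_pos
      positivity
    · rw [div_lt_iff₀ (by linarith)]
      nlinarith [Real.pi_pos]
  rw [eq_div_iff hpos.ne']
  exact S_two_mul_real_cos _ _

variable {B W : Type*} [Fintype B] [Group W]

/-- The functional of the geometric representation. -/
noncomputable def fn (M : CoxeterMatrix B) (i : B) : Module.Dual ℝ (B → ℝ) :=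
  ∑ k, (-2 * Real.cos (Real.pi / M k i)) • LinearMap.proj k

theorem fn_apply (M : CoxeterMatrix B) (i : B) (z : B → ℝ) :
    fn M i z = ∑ k, (-2 * Real.cos (Real.pi / M k i)) * z k := by
  simp [fn]

open Classical in
theorem fn_single (M : CoxeterMatrix B) (i j : B) :
    fn M i (Pi.single j 1) = -2 * Real.cos (Real.pi / M j i) := by
  rw [fn_apply, Finset.sum_eq_single j]
  · simp
  · intro b _ hb
    simp [hb]
  · simp

open Classical in
theorem fn_self (M : CoxeterMatrix B) (i : B) :
    fn M i (Pi.single i 1) = 2 := by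
  rw [fn_single]; simp

open Classical in
/-- Reflections of the geometric representation. -/
noncomputable def rf (M : CoxeterMatrix B) (i : B) : (B → ℝ) ≃ₗ[ℝ] (B → ℝ) :=
  Module.reflection (fn_self M i)

theorem rf_pow (M : CoxeterMatrix B) (i j : B) : (rf M i * rf M j) ^ (M i j) = 1 := by
  classical
  have hsymm : M j i = M i j := M.symmetric j i
  by_cases hij : i = j
  · subst hij
    rw [M.diagonal, pow_one]
    ext1 z
    exact Module.involutive_reflection (fn_self M i) z
  have hne1 : M i j ≠ 1 := M.off_diagonal i j hij
  have hxy : fn M i (Pi.single j 1) = -2 * Real.cos (Real.pi / M i j) := by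
    rw [fn_single, hsymm]
  have hyx : fn M j (Pi.single i 1) = -2 * Real.cos (Real.pi / M i j) := by
    rw [fn_single]
  generalize M i j = m at *
  ext1 z
  by_cases h0 : m = 0
  · subst h0; simp
  by_cases h2 : m = 2
  · subst h2
    simp at hxy hyx
    simp [rf, pow_two, Module.reflection_apply, hxy, hyx, fn_self]
    module
  have hm : 3 ≤ m := by omega
  have hm0 : (m : ℝ) ≠ 0 := by exact_mod_cast h0
  have ht : 2 * Real.cos (2 * Real.pi / m) =
      fn M i (Pi.single j 1) * fn M j (Pi.single i 1) - 2 := by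
    rw [hxy, hyx, mul_div_assoc, Real.cos_two_mul]; ring
  unfold rf
  rw [Module.reflection_mul_reflection_pow_apply (fn_self M i) (fn_self M j) m z _ ht]
  simp only [chebS_cos m hm]
  obtain ⟨k, hk | hk⟩ := Nat.even_or_odd' m
  · have e1 : ((m : ℤ) - 2) / 2 = k - 1 := by omega
    have e2 : ((m : ℤ) - 1) / 2 = k - 1 := by omega
    rw [e1, e2]
    have : Real.sin ((((k : ℤ) - 1 : ℤ) + 1) * (2 * Real.pi / m)) = 0 := by
      have : ((((k : ℤ) - 1 : ℤ) + 1) * (2 * Real.pi / m) : ℝ) = Real.pi := by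
        rw [hk] at hm0 ⊢
        push_cast at hm0 ⊢
        have : (k : ℝ) ≠ 0 := by intro h; simp [h] at hm0
        field_simp
        ring
      rw [this, Real.sin_pi]
    rw [this]
    simp
  · have e1 : ((m : ℤ) - 1) / 2 = k := by omega
    have e2 : ((m : ℤ) - 2) / 2 = k - 1 := by omega
    have e3 : ((m : ℤ) - 3) / 2 = k - 1 := by omega
    have e4 : (m : ℤ) / 2 = k := by omega
    rw [e1, e2, e3, e4]
    have : Real.sin ((((k : ℤ) : ℝ) + 1) * (2 * Real.pi / m)) =
        - Real.sin ((((k : ℤ) - 1 : ℤ) + 1) * (2 * Real.pi / m)) := by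
      rw [← Real.sin_two_pi_sub]
      congr 1
      rw [hk] at hm0 ⊢
      push_cast at hm0 ⊢
      field_simp
      ring
    rw [this]
    simp [neg_div]

/-- The geometric representation. -/
noncomputable def rho {M : CoxeterMatrix B} (cs : CoxeterSystem M W) :
    W →* ((B → ℝ) ≃ₗ[ℝ] (B → ℝ)) :=
  cs.lift ⟨rf M, rf_pow M⟩

open Classical in
theorem rho_simple {M : CoxeterMatrix B} (cs : CoxeterSystem M W) (i : B) (z : B → ℝ) :
    rho cs (cs.simple i) z = z - fn M i z • Pi.single i 1 := by
  have : rho cs (cs.simple i) = rf M i := cs.lift_apply_simple _ _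
  rw [this, rf, Module.reflection_apply]

/-- The standard parabolic subgroup. -/
def par {M : CoxeterMatrix B} (cs : CoxeterSystem M W) (J : Set B) : Subgroup W :=
  Subgroup.closure (cs.simple '' J)

theorem simple_notMem_par {M : CoxeterMatrix B} (cs : CoxeterSystem M W) (J : Set B) (i : B)
    (hi : i ∉ J) : cs.simple i ∉ par cs J := by
  classical
  intro h
  have key : ∀ w ∈ par cs J, ∀ z, rho cs w z i = z i := by
    intro w hw
    induction hw using Subgroup.closure_induction with
    | mem x hx =>
      obtain ⟨j, hj, rfl⟩ := hx
      intro z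
      have : i ≠ j := by rintro rfl; exact hi hj
      simp [rho_simple, this]
    | one => simp
    | mul x y _ _ hx hy => intro z; rw [map_mul, LinearEquiv.mul_apply, hx, hy]
    | inv x _ hx =>
      intro z
      rw [← hx (rho cs x⁻¹ z), ← LinearEquiv.mul_apply, ← map_mul]; simp
  have := key _ h (Pi.single i 1)
  rw [rho_simple, fn_self] at this
  simp at this

theorem half_le_cos (m : ℕ) (h1 : m ≠ 1) (h2 : m ≠ 2) : 1 / 2 ≤ Real.cos (Real.pi / m) := by
  by_cases h0 : m = 0
  · subst h0; simp; norm_num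
  have hm : (3 : ℝ) ≤ m := by
    have : 3 ≤ m := by omega
    exact_mod_cast this
  rw [← Real.cos_pi_div_three]
  have := Real.pi_pos
  apply Real.cos_le_cos_of_nonneg_of_le_pi
  · positivity
  · linarith
  · gcongr

theorem cos_nonneg (m : ℕ) (h1 : m ≠ 1) : 0 ≤ Real.cos (Real.pi / m) := by
  by_cases h2 : m = 2
  · subst h2; simp
  linarith [half_le_cos m h1 h2]

theorem commute_of_two {M : CoxeterMatrix B} (cs : CoxeterSystem M W) (i j : B) (h : M i j = 2) :
    cs.simple i * cs.simple j = cs.simple j * cs.simple i := by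
  have := cs.simple_mul_simple_pow i j
  rw [h, pow_two] at this
  rw [mul_eq_one_iff_eq_inv] at this
  simpa using this

/-- Every nonempty set of nodes has a node with at most one neighbour in the set. -/
theorem exists_leaf [Finite W] {M : CoxeterMatrix B} (cs : CoxeterSystem M W) (J : Finset B)
    (hJ : J.Nonempty) : ∃ j ∈ J, ∃ k : B, ∀ i ∈ J, i ≠ j → i ≠ k →
      cs.simple i * cs.simple j = cs.simple j * cs.simple i := by
  classical
  have := Fintype.ofFinite W
  by_contra! hcon
  set v : B → ℝ := ∑ i ∈ J, Pi.single i 1 with hv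
  have hfv : ∀ j ∈ J, fn M j v ≤ 0 := by
    intro j hj
    obtain ⟨a, haJ, haj, -, hac⟩ := hcon j hj j
    obtain ⟨b, hbJ, hbj, hba, hbc⟩ := hcon j hj a
    have ha2 : M a j ≠ 2 := fun h => hac (commute_of_two cs _ _ h)
    have hb2 : M b j ≠ 2 := fun h => hbc (commute_of_two cs _ _ h)
    have ha := half_le_cos _ (M.off_diagonal a j haj) ha2
    have hb := half_le_cos _ (M.off_diagonal b j hbj) hb2
    rw [hv, map_sum]
    simp_rw [fn_single]
    rw [← Finset.add_sum_erase _ _ hj,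
      ← Finset.add_sum_erase _ _ (show a ∈ J.erase j by simp [haj, haJ]),
      ← Finset.add_sum_erase _ _ (show b ∈ (J.erase j).erase a by simp [*])]
    have : ∑ x ∈ ((J.erase j).erase a).erase b, -2 * Real.cos (Real.pi / M x j) ≤ 0 := by
      apply Finset.sum_nonpos
      intro x hx
      simp only [Finset.mem_erase] at hx
      have := cos_nonneg _ (M.off_diagonal x j hx.2.2.1)
      linarith
    have hjj : Real.cos (Real.pi / M j j) = -1 := by simp
    rw [hjj]
    linarith
  let Q : (B → ℝ) → (B → ℝ) → ℝ := fun x y => ∑ w : W, rho cs w x ⬝ᵥ rho cs w y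
  have hQinv : ∀ g x y, Q (rho cs g x) (rho cs g y) = Q x y := by
    intro g x y
    simp only [Q, ← LinearEquiv.mul_apply, ← map_mul]
    exact Fintype.sum_equiv (Equiv.mulRight g) _ _ (fun w => rfl)
  have hQ1 : ∀ x y z, Q (x - y) z = Q x z - Q y z := by
    intro x y z
    simp [Q, sub_dotProduct]
  have hQ2 : ∀ (c : ℝ) y z, Q (c • y) z = c * Q y z := by
    intro x y z
    simp [Q, smul_dotProduct, Finset.mul_sum]
  have hQ3 : ∀ y z, Q y (-z) = - Q y z := by
    intro y z
    simp [Q]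
  have hQ4 : ∀ y, Q y v = ∑ j ∈ J, Q y (Pi.single j 1) := by
    intro y
    simp only [Q, hv, map_sum, dotProduct_sum]
    exact Finset.sum_comm
  have hQpos : ∀ y, 0 ≤ Q y y := fun y => Finset.sum_nonneg fun w _ =>
    Finset.sum_nonneg fun k _ => mul_self_nonneg _
  have hQe : ∀ x j, 2 * Q x (Pi.single j 1) = fn M j x * Q (Pi.single j 1) (Pi.single j 1) := by
    intro x j
    have h := hQinv (cs.simple j) x (Pi.single j 1)
    have e : rho cs (cs.simple j) (Pi.single j 1) = - Pi.single j 1 := by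
      rw [rho_simple, fn_self]
      module
    rw [e, rho_simple, hQ3, hQ1, hQ2] at h
    linarith
  have hvv : Q v v ≤ 0 := by
    rw [hQ4]
    apply Finset.sum_nonpos
    intro j hj
    have := hQe v j
    have h1 := hQpos (Pi.single j 1)
    have h2 := hfv j hj
    nlinarith
  have hle : v ⬝ᵥ v ≤ Q v v := by
    have := Finset.single_le_sum (f := fun w : W => rho cs w v ⬝ᵥ rho cs w v)
      (fun w _ => Finset.sum_nonneg fun k _ => mul_self_nonneg _) (Finset.mem_univ 1)
    simpa using this
  have hv0 : v = 0 := by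
    apply dotProduct_self_eq_zero.1
    exact le_antisymm (hle.trans hvv) (Finset.sum_nonneg fun k _ => mul_self_nonneg _)
  obtain ⟨j, hj⟩ := hJ
  have : v j = 1 := by
    simp [hv, Finset.sum_apply, Pi.single_apply, hj]
  rw [hv0] at this
  simp at this

end HamCox

namespace HamCox

/-- `f` restricted to `U` is a cyclic permutation (expressed by transitivity of iteration). -/
def Cyc {W : Type*} (f : W → W) (U : Set W) : Prop :=
  (∀ x ∈ U, f x ∈ U) ∧ ∀ x ∈ U, ∀ y ∈ U, Relation.ReflTransGen (fun a b => f a = b) x y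

theorem Cyc.subset {W : Type*} {f : W → W} {U V : Set W} (h : Cyc f U) {x : W} (hxU : x ∈ U)
    (hxV : x ∈ V) (hV : ∀ y ∈ U, y ∈ V → f y ∈ V) : U ⊆ V := by
  intro y hy
  have := h.2 x hxU y hy
  have h2 : y ∈ U ∧ y ∈ V := by
    clear hy
    induction this with
    | refl => exact ⟨hxU, hxV⟩
    | tail _ hbc ih => subst hbc; exact ⟨h.1 _ ih.1, hV _ ih.1 ih.2⟩
  exact h2.2

theorem Cyc.exists_pred {W : Type*} {f : W → W} {U : Set W} (h : Cyc f U) {x : W} (hx : x ∈ U) :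
    ∃ z ∈ U, f z = x := by
  have h1 := h.subset (V := f '' U) (h.1 x hx) ⟨x, hx, rfl⟩ (fun y hy _ => ⟨y, hy, rfl⟩) hx
  exact h1

/-- Merging two cycles. -/
theorem Cyc.merge {W : Type*} {f g : W → W} {U C : Set W} (hf : Cyc f U) (hg : Cyc g C)
    (hd : Disjoint U C) {p q : W} (hp : p ∈ U) (hq : q ∈ C) :
    ∃ F : W → W, Cyc F (U ∪ C) ∧ F p = g q ∧ F q = f p ∧ (∀ x ∈ U, x ≠ p → F x = f x) ∧
      (∀ x ∈ C, x ≠ q → F x = g x) := by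
  classical
  have hUC : ∀ x ∈ C, x ∉ U := fun x hx hx' => Set.disjoint_left.1 hd hx' hx
  let F : W → W := fun x => if x ∈ U then (if x = p then g q else f x)
    else (if x = q then f p else g x)
  have Fp : F p = g q := by simp [F, hp]
  have Fq : F q = f p := by simp [F, hUC q hq]
  have FU : ∀ x ∈ U, x ≠ p → F x = f x := fun x hx hxp => by simp [F, hx, hxp]
  have FC : ∀ x ∈ C, x ≠ q → F x = g x := fun x hx hxq => by simp [F, hUC x hx, hxq]
  -- general one-sided facts
  have from_ : ∀ (g' : W → W) (D : Set W) (d : W), Cyc g' D → d ∈ D →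
      (∀ x ∈ D, x ≠ d → F x = g' x) → ∀ y ∈ D,
        Relation.ReflTransGen (fun a b => F a = b) (g' d) y := by
    intro g' D d hc hd hF y hy
    refine hc.subset (V := {y | Relation.ReflTransGen (fun a b => F a = b) (g' d) y})
      (hc.1 d hd) Relation.ReflTransGen.refl ?_ hy
    intro z hz hz'
    by_cases hzd : z = d
    · subst hzd; exact Relation.ReflTransGen.refl
    · exact Relation.ReflTransGen.tail hz' (hF z hz hzd)
  have to_ : ∀ (g' : W → W) (D : Set W) (d : W), Cyc g' D → d ∈ D →
      (∀ x ∈ D, x ≠ d → F x = g' x) → ∀ y ∈ D,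
        Relation.ReflTransGen (fun a b => F a = b) y d := by
    intro g' D d hc hd hF y hy
    have h := hc.2 y hy d hd
    induction h using Relation.ReflTransGen.head_induction_on with
    | refl => exact Relation.ReflTransGen.refl
    | @head a b hab _ ih =>
      by_cases had : a = d
      · subst had; exact Relation.ReflTransGen.refl
      · subst hab
        exact Relation.ReflTransGen.head (hF a hy had) (ih (hc.1 a hy))
  have fU := from_ f U p hf hp FU
  have fC := from_ g C q hg hq FC
  have tU := to_ f U p hf hp FU
  have tC := to_ g C q hg hq FC
  refine ⟨F, ⟨?_, ?_⟩, Fp, Fq, FU, FC⟩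
  · rintro x (hx | hx)
    · by_cases hxp : x = p
      · subst hxp; rw [Fp]; exact Or.inr (hg.1 _ hq)
      · rw [FU x hx hxp]; exact Or.inl (hf.1 _ hx)
    · by_cases hxq : x = q
      · subst hxq; rw [Fq]; exact Or.inl (hf.1 _ hp)
      · rw [FC x hx hxq]; exact Or.inr (hg.1 _ hx)
  · have pq : Relation.ReflTransGen (fun a b => F a = b) p q :=
      Relation.ReflTransGen.head Fp (fC q hq)
    have all1 : ∀ x ∈ U ∪ C, Relation.ReflTransGen (fun a b => F a = b) x q := by
      rintro x (hx | hx)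
      · exact (tU x hx).trans pq
      · exact tC x hx
    have all2 : ∀ x ∈ U ∪ C, Relation.ReflTransGen (fun a b => F a = b) q x := by
      have h0 : Relation.ReflTransGen (fun a b => F a = b) q (f p) :=
        Relation.ReflTransGen.single Fq
      rintro x (hx | hx)
      · exact h0.trans (fU x hx)
      · exact (h0.trans (fU p hp)).trans (Relation.ReflTransGen.head Fp (fC x hx))
    intro x hx y hy
    exact (all1 x hx).trans (all2 y hy)

variable {B W : Type*} [Fintype B] [Group W] {M : CoxeterMatrix B} (cs : CoxeterSystem M W)

theorem simple_mem_par {J : Set B} {j : B} (hj : j ∈ J) : cs.simple j ∈ par cs J :=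
  Subgroup.subset_closure ⟨j, hj, rfl⟩

theorem par_mono {J K : Set B} (h : J ⊆ K) : par cs J ≤ par cs K :=
  Subgroup.closure_mono (Set.image_mono h)

theorem par_subset {J : Set B} {V : Set W} (h1 : (1 : W) ∈ V)
    (h : ∀ j ∈ J, ∀ x ∈ V, cs.simple j * x ∈ V) : (par cs J : Set W) ⊆ V := by
  intro w hw
  have hw' : w ∈ Subgroup.closure (cs.simple '' J) := hw
  clear hw
  induction hw' using Subgroup.closure_induction_left with
  | one => exact h1
  | mul_left x hx y _ ih => obtain ⟨j, hj, rfl⟩ := hx; exact h j hj _ ih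
  | inv_mul_cancel x hx y _ ih =>
    obtain ⟨j, hj, rfl⟩ := hx
    rw [cs.inv_simple]; exact h j hj _ ih

theorem simple_inj {i j : B} (h : cs.simple i = cs.simple j) : i = j := by
  by_contra hne
  refine simple_notMem_par cs {j} i (by simpa using hne) ?_
  rw [h]
  exact simple_mem_par cs rfl

/-- A Hamiltonian circuit on `U` with labels in `J`. -/
def Ham (J : Set B) (U : Set W) (f : W → W) : Prop :=
  Cyc f U ∧ ∀ x ∈ U, ∃ j ∈ J, f x = cs.simple j * x

theorem Ham.special {J : Set B} {f : W → W} (h : Ham cs J (par cs J) f) {j : B} (hj : j ∈ J) :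
    ∃ x ∈ par cs J, f x = cs.simple j * x := by
  by_contra! hcon
  refine simple_notMem_par cs (J \ {j}) j (by simp) ?_
  refine h.1.subset (V := par cs (J \ {j})) (one_mem _) (one_mem _) ?_ (simple_mem_par cs hj)
  intro y hy hy'
  obtain ⟨i, hi, e⟩ := h.2 y hy
  have : i ≠ j := by rintro rfl; exact hcon y hy e
  rw [e]
  exact mul_mem (simple_mem_par cs ⟨hi, this⟩) hy'

theorem ham_base [Finite W] (a b : B) : ∃ f, Ham cs {a, b} (par cs {a, b}) f := by
  classical
  let P : W → Prop := fun w => cs.lengthParity w = 1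
  have hP : ∀ i w, P (cs.simple i * w) ↔ ¬ P w := by
    intro i w
    simp only [P, map_mul, cs.lengthParity_simple]
    generalize cs.lengthParity w = z
    revert z; decide
  let f : W → W := fun x => if P x then cs.simple a * x else cs.simple b * x
  have hf : ∀ x, ∃ j ∈ ({a, b} : Set B), f x = cs.simple j * x := by
    intro x
    by_cases h : P x
    · exact ⟨a, by simp, by simp [f, h]⟩
    · exact ⟨b, by simp, by simp [f, h]⟩
  have hsurj : Function.Surjective f := by
    intro x
    by_cases h : P x
    · exact ⟨cs.simple b * x, by simp [f, hP, h]⟩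
    · exact ⟨cs.simple a * x, by simp [f, hP, h]⟩
  have hinj : Function.Injective f := Finite.injective_iff_surjective.2 hsurj
  let R : W → W → Prop := Relation.ReflTransGen (fun a b => f a = b)
  have hit : ∀ n x, R x (f^[n] x) := by
    intro n x
    induction n with
    | zero => exact Relation.ReflTransGen.refl
    | succ n ih => exact Relation.ReflTransGen.tail ih (Function.iterate_succ_apply' f n x).symm
  have hback : ∀ x, R (f x) x := by
    intro x
    obtain ⟨n, hn, hx⟩ := hinj.mem_periodicPts x
    obtain ⟨m, rfl⟩ := Nat.exists_eq_succ_of_ne_zero (Nat.pos_iff_ne_zero.1 hn)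
    have h := hit m (f x)
    rw [← Function.iterate_succ_apply] at h
    have hx : f^[m + 1] x = x := hx
    rwa [Nat.succ_eq_add_one, hx] at h
  have hfwd : ∀ x, R x (f x) := fun x => Relation.ReflTransGen.single rfl
  have hadj : ∀ j ∈ ({a, b} : Set B), ∀ x, f x = cs.simple j * x ∨ f (cs.simple j * x) = x := by
    rintro j (rfl | hj) x
    · by_cases h : P x
      · left; simp [f, h]
      · right; simp [f, hP, h]
    · rw [Set.mem_singleton_iff] at hj
      subst hj
      by_cases h : P x
      · right; simp [f, hP, h]
      · left; simp [f, h]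
  have hall : (par cs {a, b} : Set W) ⊆ {y | R 1 y ∧ R y 1} := by
    apply par_subset
    · exact ⟨Relation.ReflTransGen.refl, Relation.ReflTransGen.refl⟩
    · rintro j hj x ⟨h1, h2⟩
      rcases hadj j hj x with h | h
      · rw [← h]
        exact ⟨h1.trans (hfwd x), (hback x).trans h2⟩
      · have e1 := hfwd (cs.simple j * x)
        have e2 := hback (cs.simple j * x)
        rw [h] at e1 e2
        exact ⟨h1.trans e2, e1.trans h2⟩
  refine ⟨f, ⟨?_, ?_⟩, fun x _ => hf x⟩
  · intro x hx
    obtain ⟨j, hj, e⟩ := hf x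
    rw [e]
    exact mul_mem (simple_mem_par cs hj) hx
  · intro x hx y hy
    exact (hall hx).2.trans (hall hy).1

theorem ham_step [Finite W] {J : Set B} {r k a b : B} (hr : r ∉ J) (ha : a ∈ J) (hb : b ∈ J)
    (hab : a ≠ b)
    (hk : ∀ i ∈ J, i ≠ k → cs.simple i * cs.simple r = cs.simple r * cs.simple i)
    {φ : W → W} (hφ : Ham cs J (par cs J) φ) :
    ∃ f, Ham cs (insert r J) (par cs (insert r J)) f := by
  classical
  let P : Set W → Prop := fun U => (1 : W) ∈ U ∧ U ⊆ par cs (insert r J) ∧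
    (∀ h ∈ par cs J, ∀ x ∈ U, h * x ∈ U) ∧ ∃ f, Ham cs (insert r J) U f
  have hle : par cs J ≤ par cs (insert r J) := par_mono cs (Set.subset_insert _ _)
  have hrm : cs.simple r ∈ par cs (insert r J) := simple_mem_par cs (Set.mem_insert _ _)
  have hP0 : P (par cs J) := by
    refine ⟨one_mem _, hle, fun h hh x hx => mul_mem hh hx, φ, hφ.1, fun x hx => ?_⟩
    obtain ⟨j, hj, e⟩ := hφ.2 x hx
    exact ⟨j, Or.inr hj, e⟩
  obtain ⟨U, hU⟩ := (Set.toFinite {U | P U}).exists_maximal ⟨_, hP0⟩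
  obtain ⟨h1, hsub, hinv, f, hf⟩ := hU.prop
  have hcl : ∀ x ∈ U, cs.simple r * x ∈ U := by
    intro x hx
    by_contra hrx
    -- find the edge
    have hsU : ∀ j ∈ J, ∀ x ∈ U, cs.simple j * x ∈ U := fun j hj =>
      hinv _ (simple_mem_par cs hj)
    obtain ⟨p, s, hp, hrp, hs, hsk, hfp⟩ : ∃ p s, p ∈ U ∧ cs.simple r * p ∉ U ∧ s ∈ J ∧
        cs.simple s * cs.simple r = cs.simple r * cs.simple s ∧ f p = cs.simple s * p := by
      obtain ⟨j, hj, hfx⟩ := hf.2 x hx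
      obtain ⟨z, hz, hzx⟩ := hf.1.exists_pred hx
      obtain ⟨i, hi, hfz⟩ := hf.2 z hz
      have hzx' : z = cs.simple i * x := by
        rw [← hzx, hfz]; simp
      have hj' : j ∈ J := by
        rcases hj with rfl | hj
        · exact absurd (hfx ▸ hf.1.1 x hx) hrx
        · exact hj
      have hi' : i ∈ J := by
        rcases hi with rfl | hi
        · exact absurd (hzx' ▸ hz) hrx
        · exact hi
      by_cases hjk : j = k
      · by_cases hik : i = k
        · exfalso
          have hsubs : U ⊆ {x, cs.simple k * x} := by
            refine hf.1.subset hx (by simp) ?_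
            rintro y - (rfl | hy)
            · right; rw [hfx, hjk]; rfl
            · left
              rw [Set.mem_singleton_iff] at hy
              rw [hy, ← hik, ← hzx', hzx]
          have key : ∀ c ∈ J, c = k := by
            intro c hc
            rcases hsubs (hsU c hc x hx) with h | h
            · exfalso
              have h : cs.simple c * x = x := h
              have h' : cs.simple c = 1 := by simpa using h
              exact simple_notMem_par cs ∅ c (by simp) (h' ▸ one_mem _)
            · exact simple_inj cs (mul_right_cancel (b := x) h)
          exact hab ((key a ha).trans (key b hb).symm)
        · have hcomm := hk i hi' hik
          refine ⟨z, i, hz, ?_, hi', hcomm, hfz⟩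
          intro hmem
          apply hrx
          have := hsU i hi' _ hmem
          rwa [← mul_assoc, hcomm, mul_assoc, ← hfz, hzx] at this
      · exact ⟨x, j, hx, hrx, hj', hk j hj' hjk, hfx⟩
    obtain ⟨h, hh, hφh⟩ := hφ.special cs hs
    set y := h⁻¹ * (cs.simple s * cs.simple r * p) with hy
    let g : W → W := fun c => φ (c * y⁻¹) * y
    let C : Set W := {c | c * y⁻¹ ∈ par cs J}
    have hCinv : ∀ h ∈ par cs J, ∀ x ∈ C, h * x ∈ C := by
      intro h hh x hx
      change h * x * y⁻¹ ∈ par cs J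
      rw [mul_assoc]; exact mul_mem hh hx
    have hg : Cyc g C := by
      constructor
      · intro c hc
        change φ (c * y⁻¹) * y * y⁻¹ ∈ par cs J
        rw [mul_inv_cancel_right]
        exact hφ.1.1 _ hc
      · intro c hc d hd
        have := hφ.1.2 _ hc _ hd
        have h2 := Relation.ReflTransGen.lift (r := fun a b => φ a = b) (p := fun a b => g a = b)
          (fun u => u * y) (fun u v huv => by simpa [g, Function.onFun] using huv) _ _ this
        simpa [Function.onFun] using h2
    have hss : cs.simple s ∈ par cs J := simple_mem_par cs hs
    have hdis : Disjoint U C := by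
      rw [Set.disjoint_left]
      intro u hu hc
      apply hrp
      have := hinv _ (mul_mem (mul_mem hss hh) (inv_mem hc)) u hu
      rw [hy] at this
      convert this using 1
      simp [mul_assoc]
    set q := cs.simple s * cs.simple r * p with hq
    have hqy : q * y⁻¹ = h := by rw [hy]; group
    have hqC : q ∈ C := by change q * y⁻¹ ∈ par cs J; rw [hqy]; exact hh
    have hgq : g q = cs.simple r * p := by
      simp only [g, hqy, hφh]
      rw [mul_assoc, hy, hq]
      simp [mul_assoc]
    obtain ⟨F, hF, Fp, Fq, FU, FC⟩ := hf.1.merge hg hdis hp hqC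
    have hyG : y ∈ par cs (insert r J) :=
      mul_mem (inv_mem (hle hh)) (mul_mem (mul_mem (hle hss) hrm) (hsub hp))
    have hPU : P (U ∪ C) := by
      refine ⟨Or.inl h1, ?_, ?_, F, hF, ?_⟩
      · rintro x (hx | hx)
        · exact hsub hx
        · have : x * y⁻¹ ∈ par cs J := hx
          have := mul_mem (hle this) hyG
          simpa using this
      · rintro h hh x (hx | hx)
        · exact Or.inl (hinv h hh x hx)
        · exact Or.inr (hCinv h hh x hx)
      · rintro x (hx | hx)
        · by_cases hxp : x = p
          · subst hxp
            exact ⟨r, Or.inl rfl, by rw [Fp, hgq]⟩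
          · rw [FU x hx hxp]; exact hf.2 x hx
        · by_cases hxq : x = q
          · refine ⟨r, Or.inl rfl, ?_⟩
            rw [hxq, Fq, hfp, hq, hsk]
            simp [mul_assoc]
          · rw [FC x hx hxq]
            obtain ⟨j, hj, e⟩ := hφ.2 _ hx
            refine ⟨j, Or.inr hj, ?_⟩
            simp only [g, e]
            simp [mul_assoc]
    have := hU.le_of_ge hPU Set.subset_union_left
    exact Set.disjoint_left.1 hdis (this (Or.inr hqC)) hqC
  have hUeq : U = par cs (insert r J) := by
    refine Set.Subset.antisymm hsub (par_subset cs h1 ?_)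
    rintro j (rfl | hj) x hx
    · exact hcl x hx
    · exact hinv _ (simple_mem_par cs hj) x hx
  exact ⟨f, hUeq ▸ hf⟩

theorem ham_all [Finite W] (n : ℕ) : ∀ J : Finset B, J.card = n + 1 →
    ∃ f, Ham cs (J : Set B) (par cs (J : Set B)) f := by
  classical
  induction n with
  | zero =>
    intro J hJ
    obtain ⟨a, rfl⟩ := Finset.card_eq_one.1 hJ
    have := ham_base cs a a
    simpa using this
  | succ n ih =>
    intro J hJ
    rcases Nat.eq_zero_or_pos n with rfl | hn
    · obtain ⟨a, b, -, rfl⟩ := Finset.card_eq_two.1 hJ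
      have := ham_base cs a b
      simpa using this
    · obtain ⟨r, hr, k, hk⟩ := exists_leaf cs J (Finset.card_pos.1 (by omega))
      have hc : (J.erase r).card = n + 1 := by rw [Finset.card_erase_of_mem hr]; omega
      obtain ⟨φ, hφ⟩ := ih _ hc
      obtain ⟨a, ha, b, hb, hab⟩ := Finset.one_lt_card.1 (show 1 < (J.erase r).card by omega)
      have := ham_step cs (J := ((J.erase r : Finset B) : Set B)) (r := r) (k := k)
        (by simp) ha hb hab (fun i hi hik => hk i (Finset.mem_of_mem_erase hi)
          (Finset.ne_of_mem_erase hi) hik) hφ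
      have e : insert r ((J.erase r : Finset B) : Set B) = (J : Set B) := by
        rw [← Finset.coe_insert, Finset.insert_erase hr]
      rwa [e] at this

end HamCox

/-- For every finite Coxeter system `(W, S)` over a nonempty finite index set `B`,
there exists a special Hamiltonian circuit map: a bijection `θ : ℤ/kℤ → W`
(`k = |W|`) whose consecutive ratios `θ(t+1)·θ(t)⁻¹` are simple reflections, and in
which every simple reflection occurs as an edge label. -/
theorem exists_special_hamiltonianCircuitMap_of_finite_coxeterSystem
    {B W : Type*} [Fintype B] [Nonempty B] [Group W] [Finite W]
    (M : CoxeterMatrix B) (cs : CoxeterSystem M W) :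
    ∃ θ : ZMod (Nat.card W) → W, Function.Bijective θ ∧
      (∀ t, θ (t + 1) * (θ t)⁻¹ ∈ Set.range cs.simple) ∧
      (∀ i : B, ∃ t, θ (t + 1) = cs.simple i * θ t) := by
  classical
  have := Fintype.ofFinite W
  obtain ⟨n, hn⟩ : ∃ n, (Finset.univ : Finset B).card = n + 1 :=
    Nat.exists_eq_succ_of_ne_zero (by simp)
  obtain ⟨f, hf⟩ := HamCox.ham_all cs n Finset.univ hn
  have htop : HamCox.par cs ((Finset.univ : Finset B) : Set B) = ⊤ := by
    simp [HamCox.par, cs.subgroup_closure_range_simple]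
  have hsp : ∀ i, ∃ x, f x = cs.simple i * x := fun i => by
    obtain ⟨x, -, hx⟩ := hf.special cs (j := i) (by simp)
    exact ⟨x, hx⟩
  rw [htop] at hf
  have hsurj : Function.Surjective f := fun x => by
    obtain ⟨z, -, hz⟩ := hf.1.exists_pred (x := x) trivial
    exact ⟨z, hz⟩
  let e : Equiv.Perm W := Equiv.ofBijective f (Finite.surjective_iff_bijective.1 hsurj)
  have hcyc : e.IsCycleOn (Finset.univ : Finset W) := by
    refine ⟨by simp, fun x _ y _ => ?_⟩
    have := hf.1.2 x trivial y trivial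
    rename_i hy
    clear hy
    induction this with
    | refl => exact Equiv.Perm.SameCycle.refl _ _
    | tail _ hbc ih =>
      subst hbc
      exact ih.trans (Equiv.Perm.sameCycle_apply_right.2 (Equiv.Perm.SameCycle.refl _ _))
  have hcard : Nat.card W = (Finset.univ : Finset W).card := by simp
  have hne : NeZero (Nat.card W) := ⟨Nat.card_pos.ne'⟩
  let θ : ZMod (Nat.card W) → W := fun t => (e ^ t.val) 1
  have hstep : ∀ t, θ (t + 1) = f (θ t) := by
    intro t
    have : f (θ t) = (e ^ (t.val + 1)) 1 := by
      rw [pow_succ']; rfl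
    rw [this]
    change (e ^ (t + 1).val) 1 = _
    rw [hcyc.pow_apply_eq_pow_apply (Finset.mem_univ _), ← hcard, ← ZMod.natCast_eq_natCast_iff]
    simp
  have hθs : Function.Surjective θ := by
    intro y
    obtain ⟨m, hm, h⟩ := hcyc.exists_pow_eq (Finset.mem_univ 1) (Finset.mem_univ y)
    refine ⟨(m : ZMod (Nat.card W)), ?_⟩
    change (e ^ (m : ZMod (Nat.card W)).val) 1 = y
    rw [ZMod.val_natCast_of_lt (by rwa [hcard]), h]
  refine ⟨θ, ?_, ?_, ?_⟩
  · exact (Function.Surjective.bijective_of_nat_card_le hθs (by simp))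
  · intro t
    obtain ⟨j, -, hj⟩ := hf.2 (θ t) trivial
    exact ⟨j, by rw [hstep, hj]; simp⟩
  · intro i
    obtain ⟨x, hx⟩ := hsp i
    obtain ⟨t, rfl⟩ := hθs x
    exact ⟨t, by rw [hstep, hx]⟩
end

section
/- Let (W, S) be a finite Coxeter system over a nonempty finite index set B. Then for every element v ∈ W and every index i ∈ B there exist a Hamiltonian circuit map θ : ℤ/kℤ → W (k = |W|) and t ∈ ℤ/kℤ such that θ(t) = v and θ(t+1) = sᵢ · v; that is, the Cayley graph of (W, S) has a Hamilton circuit passing through any prescribed vertex along an edge with any prescribed label. -/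
namespace CoxHam

section geometric
open Polynomial.Chebyshev

variable {B W : Type*} [Group W]

noncomputable def form (M : CoxeterMatrix B) (i j : B) : ℝ := - Real.cos (Real.pi / M i j)

lemma form_symm (M : CoxeterMatrix B) (i j : B) : form M i j = form M j i := by
  simp [form, M.symmetric i j]

lemma form_self (M : CoxeterMatrix B) (i : B) : form M i i = 1 := by
  simp [form]

lemma form_two (M : CoxeterMatrix B) (i j : B) (h : M i j = 2) : form M i j = 0 := by
  simp [form, h]

lemma form_le (M : CoxeterMatrix B) (i j : B) (hij : i ≠ j) (h : M i j ≠ 2) :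
    form M i j ≤ - (1 / 2) := by
  have h1 := M.off_diagonal i j hij
  unfold form
  rw [neg_le_neg_iff, ← Real.cos_pi_div_three]
  rcases Nat.eq_zero_or_pos (M i j) with h0 | h0
  · simp [h0]
    norm_num
  have h3 : 3 ≤ M i j := by
    have h1' : M i j ≠ 1 := h1
    omega
  have h3' : (3 : ℝ) ≤ M i j := by exact_mod_cast h3
  apply Real.cos_le_cos_of_nonneg_of_le_pi
  · positivity
  · linarith [Real.pi_pos]
  · gcongr

lemma form_nonpos (M : CoxeterMatrix B) (i j : B) (hij : i ≠ j) : form M i j ≤ 0 := by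
  by_cases h : M i j = 2
  · rw [form_two M i j h]
  · linarith [form_le M i j hij h]

section
set_option linter.unusedSectionVars false
variable [Fintype B] [DecidableEq B]

noncomputable def cof (M : CoxeterMatrix B) (i : B) : Module.Dual ℝ (B → ℝ) :=
  ∑ j, (2 * form M i j) • LinearMap.proj j

lemma cof_apply (M : CoxeterMatrix B) (i : B) (x : B → ℝ) :
    cof M i x = 2 * ∑ j, form M i j * x j := by
  simp [cof, Finset.mul_sum, mul_assoc]

lemma cof_single (M : CoxeterMatrix B) (i j : B) :
    cof M i (Pi.single j 1) = 2 * form M i j := by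
  simp [cof_apply, Pi.single_apply]

lemma cof_self (M : CoxeterMatrix B) (i : B) : cof M i (Pi.single i 1) = 2 := by
  simp [cof_single, form_self]

noncomputable def refl (M : CoxeterMatrix B) (i : B) : (B → ℝ) ≃ₗ[ℝ] (B → ℝ) :=
  Module.reflection (cof_self M i)

lemma refl_apply (M : CoxeterMatrix B) (i : B) (x : B → ℝ) :
    refl M i x = x - cof M i x • Pi.single i 1 := by
  simp [refl, Module.reflection_apply]

lemma S_cos_add_eq_zero {m : ℕ} (hm : 3 ≤ m) (a b : ℤ) (h : a + b + 2 = m) :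
    (S ℝ a).eval (2 * Real.cos (2 * Real.pi / m))
      + (S ℝ b).eval (2 * Real.cos (2 * Real.pi / m)) = 0 := by
  have hm' : (3 : ℝ) ≤ m := by exact_mod_cast hm
  set θ := 2 * Real.pi / (m : ℝ) with hθ
  have hmθ : (m : ℝ) * θ = 2 * Real.pi := by
    rw [hθ]; field_simp
  have hpos : 0 < Real.sin θ := by
    apply Real.sin_pos_of_pos_of_lt_pi
    · have := Real.pi_pos
      positivity
    · rw [hθ, div_lt_iff₀ (by linarith)]
      nlinarith [Real.pi_pos]
  have h1 := S_two_mul_real_cos θ a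
  have h2 := S_two_mul_real_cos θ b
  have h3 : ((b : ℝ) + 1) * θ = 2 * Real.pi - (a + 1) * θ := by
    have : (b : ℝ) = m - a - 2 := by
      have : (a : ℝ) + b + 2 = m := by exact_mod_cast h
      linarith
    rw [this, ← hmθ]; ring
  rw [h3, Real.sin_two_pi_sub] at h2
  have : ((S ℝ a).eval (2 * Real.cos θ) + (S ℝ b).eval (2 * Real.cos θ)) * Real.sin θ = 0 := by
    rw [add_mul, h1, h2]; ring
  exact (mul_eq_zero.mp this).resolve_right hpos.ne'

lemma refl_pow (M : CoxeterMatrix B) : M.IsLiftable (refl M) := by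
  intro i j
  rcases eq_or_ne i j with rfl | hij
  · rw [M.diagonal i, pow_one]
    ext1 x
    exact Module.involutive_reflection (cof_self M i) x
  have h1 : M i j ≠ 1 := M.off_diagonal i j hij
  by_cases h0 : M i j = 0
  · rw [h0, pow_zero]
  by_cases h2 : M i j = 2
  · have e1 := form_two M i j h2
    have e2 : form M j i = 0 := by rw [form_symm, e1]
    ext1 x
    rw [h2, pow_two]
    simp only [LinearEquiv.mul_apply, refl_apply, map_sub, map_smul, cof_single, e1, e2,
      form_self, LinearEquiv.coe_one, id]
    module
  have h3 : 3 ≤ M i j := by omega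
  apply LinearEquiv.toLinearMap_injective
  unfold refl
  have ht : 2 * Real.cos (2 * Real.pi / (M i j : ℕ)) =
      cof M i (Pi.single j 1) * cof M j (Pi.single i 1) - 2 := by
    rw [cof_single, cof_single, form_symm M j i, form, mul_div_assoc, Real.cos_two_mul]
    ring
  rw [Module.reflection_mul_reflection_pow (cof_self M i) (cof_self M j) (M i j) _ ht]
  generalize M i j = m at *
  have z1 : ((S ℝ (((m : ℤ) - 2) / 2)).eval (2 * Real.cos (2 * Real.pi / m)) *
     ((S ℝ (((m : ℤ) - 1) / 2)).eval (2 * Real.cos (2 * Real.pi / m)) +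
      (S ℝ (((m : ℤ) - 3) / 2)).eval (2 * Real.cos (2 * Real.pi / m)))) = 0 := by
    rcases Nat.even_or_odd' m with ⟨k, hk | hk⟩
    · have := S_cos_add_eq_zero h3 (((m : ℤ) - 2) / 2) (((m : ℤ) - 2) / 2) (by omega)
      rw [mul_eq_zero]; left; linarith
    · rw [S_cos_add_eq_zero h3 _ _ (by omega), mul_zero]
  have z2 : ((S ℝ (((m : ℤ) - 1) / 2)).eval (2 * Real.cos (2 * Real.pi / m)) *
     ((S ℝ ((m : ℤ) / 2)).eval (2 * Real.cos (2 * Real.pi / m)) +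
      (S ℝ (((m : ℤ) - 2) / 2)).eval (2 * Real.cos (2 * Real.pi / m)))) = 0 := by
    rcases Nat.even_or_odd' m with ⟨k, hk | hk⟩
    · have := S_cos_add_eq_zero h3 (((m : ℤ) - 1) / 2) (((m : ℤ) - 1) / 2) (by omega)
      rw [mul_eq_zero]; left; linarith
    · rw [S_cos_add_eq_zero h3 _ _ (by omega), mul_zero]
  rw [z1, z2]
  simp

noncomputable def rep {M : CoxeterMatrix B} (cs : CoxeterSystem M W) :
    W →* ((B → ℝ) ≃ₗ[ℝ] (B → ℝ)) := cs.lift ⟨refl M, refl_pow M⟩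

lemma rep_simple {M : CoxeterMatrix B} (cs : CoxeterSystem M W) (i : B) :
    rep cs (cs.simple i) = refl M i := cs.lift_apply_simple (refl_pow M) i

/-- A simple reflection is not in the subgroup generated by the others. -/
lemma simple_notMem_closure {M : CoxeterMatrix B} (cs : CoxeterSystem M W) (i : B)
    (T : Set B) (hi : i ∉ T) : cs.simple i ∉ Subgroup.closure (cs.simple '' T) := by
  intro h
  have key : ∀ w ∈ Subgroup.closure (cs.simple '' T), ∀ x : B → ℝ, rep cs w x i = x i := by
    intro w hw
    induction hw using Subgroup.closure_induction with
    | mem w hw =>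
      obtain ⟨j, hj, rfl⟩ := hw
      intro x
      have : i ≠ j := fun e => hi (e ▸ hj)
      rw [rep_simple, refl_apply]
      simp [this]
    | one => simp
    | mul a b _ _ ha hb => intro x; rw [map_mul, LinearEquiv.mul_apply, ha, hb]
    | inv a _ ha =>
      intro x
      rw [← ha (rep cs a⁻¹ x), ← LinearEquiv.mul_apply, ← map_mul, mul_inv_cancel]
      simp
  have := key _ h (Pi.single i 1)
  rw [rep_simple, refl_apply, cof_self] at this
  norm_num at this

/-- In a finite Coxeter group, every nonempty subdiagram has a vertex of degree at most one. -/
lemma exists_leaf [Finite W] {M : CoxeterMatrix B} (cs : CoxeterSystem M W) (T : Finset B)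
    (hT : T.Nonempty) : ∃ s ∈ T, ∀ i ∈ T, ∀ j ∈ T, i ≠ s → j ≠ s → M s i ≠ 2 → M s j ≠ 2 →
      i = j := by
  by_contra! hcon
  have := Fintype.ofFinite W
  let Q : (B → ℝ) → (B → ℝ) → ℝ := fun x y => ∑ w : W, rep cs w x ⬝ᵥ rep cs w y
  have Qinv : ∀ g x y, Q (rep cs g x) (rep cs g y) = Q x y := by
    intro g x y
    simp only [Q, ← LinearEquiv.mul_apply, ← map_mul]
    exact Equiv.sum_comp (Equiv.mulRight g) (fun w => rep cs w x ⬝ᵥ rep cs w y)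
  have Qsymm : ∀ x y, Q x y = Q y x := fun x y => by
    simp only [Q]; simp_rw [dotProduct_comm]
  have Qadd : ∀ x y z, Q (x + y) z = Q x z + Q y z := fun x y z => by
    simp [Q, Finset.sum_add_distrib]
  have Qsmul : ∀ (c : ℝ) x z, Q (c • x) z = c * Q x z := fun c x z => by
    simp [Q, Finset.mul_sum]
  have Qpos : ∀ x, x ≠ 0 → 0 < Q x x := fun x hx => by
    apply Finset.sum_pos
    · intro w _
      have h0 : rep cs w x ≠ 0 := by simpa using hx
      have h1 : 0 ≤ rep cs w x ⬝ᵥ rep cs w x :=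
        Finset.sum_nonneg fun i _ => mul_self_nonneg _
      exact lt_of_le_of_ne h1 fun h => h0 (dotProduct_self_eq_zero.1 h.symm)
    · exact ⟨1, by simp⟩
  let e : B → (B → ℝ) := fun i => Pi.single i 1
  have he : ∀ i, e i ≠ 0 := fun i h => by
    have := congrFun h i
    simp [e] at this
  let QL : (B → ℝ) → (B → ℝ) →ₗ[ℝ] ℝ := fun z =>
    { toFun := fun x => Q x z, map_add' := fun x y => Qadd x y z
      map_smul' := fun c x => Qsmul c x z }
  have Qe : ∀ i x, Q x (e i) = (∑ j, form M i j * x j) * Q (e i) (e i) := by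
    intro i x
    have h1 := Qinv (cs.simple i) x (e i)
    have h2 : rep cs (cs.simple i) (e i) = (-1 : ℝ) • e i := by
      rw [rep_simple, refl_apply, cof_self]; module
    have h3 : rep cs (cs.simple i) x = x + (- cof M i x) • e i := by
      rw [rep_simple, refl_apply]; module
    rw [h2, h3, Qsymm, Qsmul, Qsymm, Qadd, Qsmul, cof_apply] at h1
    linarith
  have Qee : ∀ i j, Q (e j) (e i) = form M i j * Q (e i) (e i) := by
    intro i j
    rw [Qe]; simp [e, Pi.single_apply]
  have hc : ∀ i, 0 < Q (e i) (e i) := fun i => Qpos _ (he i)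
  have hcc : ∀ i j, form M i j ≠ 0 → Q (e i) (e i) = Q (e j) (e j) := by
    intro i j h
    have h1 := Qee i j
    have h2 := Qee j i
    rw [Qsymm, h1, form_symm M j i] at h2
    exact mul_left_cancel₀ h h2
  -- normalised vectors
  let r : B → ℝ := fun i => (√(Q (e i) (e i)))⁻¹
  have hr : ∀ i, 0 < r i := fun i => by
    have := hc i
    simp only [r]; positivity
  have hrr : ∀ i, r i * r i * Q (e i) (e i) = 1 := fun i => by
    have := Real.mul_self_sqrt (hc i).le
    have h0 : √(Q (e i) (e i)) ≠ 0 := (Real.sqrt_pos.2 (hc i)).ne'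
    simp only [r]
    rw [← mul_inv, this]
    exact inv_mul_cancel₀ (hc i).ne'
  have Qff : ∀ i j, r i * r j * Q (e j) (e i) = form M i j := by
    intro i j
    rw [Qee]
    by_cases h : form M i j = 0
    · simp [h]
    · have : r j = r i := by simp only [r]; rw [hcc i j h]
      rw [this]
      linear_combination form M i j * hrr i
  let v : B → ℝ := ∑ j ∈ T, r j • e j
  have hv : v ≠ 0 := by
    obtain ⟨i, hi⟩ := hT
    intro h
    have := congrFun h i
    simp [v, e, Pi.single_apply, hi] at this
    exact (hr i).ne' this
  have hQv : Q v v = ∑ i ∈ T, ∑ j ∈ T, form M i j := by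
    have h1 : ∀ z, Q v z = ∑ j ∈ T, r j * Q (e j) z := by
      intro z
      change QL z v = ∑ j ∈ T, r j * QL z (e j)
      simp [v, map_sum]
    rw [h1]
    refine Finset.sum_congr rfl fun i hi => ?_
    rw [Qsymm, h1, Finset.mul_sum]
    refine Finset.sum_congr rfl fun j hj => ?_
    rw [← Qff]; ring
  have hle : ∑ i ∈ T, ∑ j ∈ T, form M i j ≤ 0 := by
    apply Finset.sum_nonpos
    intro s hs
    obtain ⟨i, hi, j, hj, his, hjs, hMi, hMj, hij⟩ := hcon s hs
    have hsub : ({s, i, j} : Finset B) ⊆ T := by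
      intro x; simp; rintro (rfl | rfl | rfl) <;> assumption
    rw [← Finset.sum_sdiff hsub]
    have h1 : ∑ x ∈ T \ {s, i, j}, form M s x ≤ 0 := by
      apply Finset.sum_nonpos
      intro x hx
      apply form_nonpos
      rintro rfl
      simp at hx
    have h2 : ∑ x ∈ ({s, i, j} : Finset B), form M s x = form M s s + (form M s i + form M s j) := by
      rw [Finset.sum_insert (by simp [his.symm, hjs.symm]), Finset.sum_pair hij]
    have h3 := form_le M s i his.symm hMi
    have h4 := form_le M s j hjs.symm hMj
    rw [h2, form_self]
    linarith
  have := Qpos v hv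
  linarith

end
end geometric

section
variable {B W : Type*} [Group W]

/-- `s` : generators, `T` allowed labels. -/
def Adj (s : B → W) (T : Finset B) (x y : W) : Prop := ∃ i ∈ T, y = s i * x

structure PathOn (s : B → W) (T : Finset B) (U : Set W) (x y : W) (l : List W) : Prop where
  nodup : l.Nodup
  mem : ∀ z, z ∈ l ↔ z ∈ U
  chain : l.IsChain (Adj s T)
  head : l.head? = some x
  last : l.getLast? = some y

variable {s : B → W} {T T' : Finset B} {U V : Set W} {x y z w : W} {l l' : List W}

lemma Adj.mono (h : T ⊆ T') (hA : Adj s T x y) : Adj s T' x y := by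
  obtain ⟨i, hi, e⟩ := hA
  exact ⟨i, h hi, e⟩

lemma PathOn.mono (h : T ⊆ T') (p : PathOn s T U x y l) : PathOn s T' U x y l :=
  ⟨p.nodup, p.mem, p.chain.imp fun _ _ h' => h'.mono h, p.head, p.last⟩

lemma PathOn.translate (p : PathOn s T U x y l) (g : W) :
    PathOn s T {z | z * g⁻¹ ∈ U} (x * g) (y * g) (l.map (· * g)) := by
  refine ⟨p.nodup.map (mul_left_injective g), ?_, ?_, ?_, ?_⟩
  · intro z
    simp only [List.mem_map, Set.mem_ofPred_eq]
    constructor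
    · rintro ⟨a, ha, rfl⟩
      simpa using (p.mem a).1 ha
    · intro h
      exact ⟨z * g⁻¹, (p.mem _).2 h, by simp⟩
  · apply List.isChain_map_of_isChain _ _ p.chain
    rintro a b ⟨i, hi, rfl⟩
    exact ⟨i, hi, by simp [mul_assoc]⟩
  · simp [p.head]
  · simp [p.last]

lemma PathOn.append (p : PathOn s T U x y l) (q : PathOn s T V z w l') (hd : Disjoint U V)
    (h : Adj s T y z) : PathOn s T (U ∪ V) x w (l ++ l') := by
  refine ⟨?_, ?_, ?_, ?_, ?_⟩
  · refine List.Nodup.append p.nodup q.nodup ?_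
    intro a ha hb
    exact Set.disjoint_left.1 hd ((p.mem a).1 ha) ((q.mem a).1 hb)
  · intro a
    simp [p.mem, q.mem]
  · rw [List.isChain_append]
    refine ⟨p.chain, q.chain, ?_⟩
    rw [p.last, q.head]
    simpa using h
  · simp [List.head?_append, p.head]
  · simp [List.getLast?_append, q.last]

lemma PathOn.rotate {p q : List W} {u v : W} (h : PathOn s T U x y (p ++ u :: v :: q))
    (hc : Adj s T y x) : PathOn s T U v u (v :: q ++ (p ++ [u])) := by
  have e : p ++ u :: v :: q = (p ++ [u]) ++ (v :: q) := by simp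
  rw [e] at h
  refine ⟨?_, ?_, ?_, ?_, ?_⟩
  · exact List.nodup_append_comm.1 h.nodup
  · intro z
    rw [← h.mem]
    simp only [List.mem_append]
    tauto
  · have h1 := h.chain
    have h2 := h.head
    have h3 := h.last
    rw [List.isChain_append] at h1 ⊢
    refine ⟨h1.2.1, h1.1, ?_⟩
    intro a ha b hb
    have ea : a = y := by
      rw [List.getLast?_append_of_ne_nil _ (by simp)] at h3
      simpa [h3] using ha.symm
    have eb : b = x := by
      rw [List.head?_append_of_ne_nil _ (by simp)] at h2
      simpa [h2] using hb.symm
    rw [ea, eb]; exact hc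
  · simp
  · rw [← List.append_assoc, List.getLast?_concat]

/-- Neighbours of `a` on a circuit. -/
lemma PathOn.neighbours (h : PathOn s T U x y l) (hc : Adj s T y x) (hU : 3 ≤ l.length)
    {a : W} (ha : a ∈ U) : ∃ b c l₁ l₂, b ≠ c ∧ Adj s T a b ∧ Adj s T c a ∧
      PathOn s T U b a l₁ ∧ PathOn s T U a c l₂ ∧ l₁.length = l.length ∧ l₂.length = l.length := by
  -- first, a closed path starting at `a`
  obtain ⟨c, l₂, hac, hl₂, hlen⟩ : ∃ c l₂, Adj s T c a ∧ PathOn s T U a c l₂ ∧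
      l₂.length = l.length := by
    obtain ⟨p, q, rfl⟩ := List.append_of_mem ((h.mem a).2 ha)
    rcases List.eq_nil_or_concat' p with rfl | ⟨p', u, rfl⟩
    · have := h.head
      simp at this
      subst this
      exact ⟨y, _, hc, h, rfl⟩
    · have e : p' ++ [u] ++ a :: q = p' ++ u :: a :: q := by simp
      rw [e] at h ⊢
      refine ⟨u, _, ?_, h.rotate hc, by simp; omega⟩
      have := h.chain
      rw [List.isChain_append_cons_cons] at this
      exact this.2.1
  obtain ⟨b, m, rfl⟩ : ∃ b m, l₂ = a :: b :: m := by
    have h1 := hl₂.head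
    match l₂, hlen, h1 with
    | [], hlen, _ => simp at hlen; omega
    | [_], hlen, _ => simp at hlen; omega
    | a' :: b :: m, _, h1 => simp at h1; exact ⟨b, m, by rw [h1]⟩
  have hrot := PathOn.rotate (p := []) hl₂ hac
  refine ⟨b, c, _, _, ?_, ?_, hac, hrot, hl₂, by simp at hlen ⊢; omega, hlen⟩
  · rintro rfl
    have h1 := hl₂.last
    have h2 := hl₂.nodup
    have hm : m ≠ [] := by
      rintro rfl; simp at hlen; omega
    have h3 : b ∈ m := by
      rw [show a :: b :: m = [a, b] ++ m by simp, List.getLast?_append_of_ne_nil _ hm] at h1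
      exact List.mem_of_getLast? h1
    simp [h3] at h2
  · have := hl₂.chain
    simp at this
    exact this.1

/-- The parabolic subgroup. -/
abbrev para (s : B → W) (T : Finset B) : Subgroup W := Subgroup.closure (s '' (T : Set B))

lemma gen_mem {i : B} (hi : i ∈ T) : s i ∈ para s T :=
  Subgroup.subset_closure ⟨i, hi, rfl⟩

lemma chain_mem (T : Finset B) : ∀ (l : List W) (x : W), (x :: l).IsChain (Adj s T) →
    ∀ z ∈ x :: l, z * x⁻¹ ∈ para s T := by
  intro l
  induction l with
  | nil => intro x _ z hz; simp at hz; subst hz; simp [one_mem]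
  | cons a l ih =>
    intro x h z hz
    rw [List.isChain_cons_cons] at h
    rcases List.mem_cons.1 hz with rfl | hz
    · simp [one_mem]
    · have h1 := ih a h.2 z hz
      obtain ⟨i, hi, rfl⟩ := h.1
      have := mul_mem h1 (gen_mem (s := s) hi)
      simpa [mul_assoc] using this

lemma labels [DecidableEq B] (indep : ∀ (i : B) (T : Set B), i ∉ T → s i ∉ Subgroup.closure (s '' T))
    (p : PathOn s T (para s T) x y l) (hc : Adj s T y x) {i : B} (hi : i ∈ T) :
    ∃ l', PathOn s T (para s T) (s i) 1 l' := by
  by_cases h : ∃ p' q' u, l = p' ++ u :: (s i * u) :: q'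
  · obtain ⟨p', q', u, rfl⟩ := h
    have h1 := (p.rotate hc).translate u⁻¹
    have hu : u ∈ para s T := (p.mem u).1 (by simp)
    have e : {z | z * u⁻¹⁻¹ ∈ (para s T : Set W)} = para s T := by
      ext z
      simp only [Set.mem_ofPred_eq, inv_inv, SetLike.mem_coe]
      exact Subgroup.mul_mem_cancel_right _ hu
    rw [e] at h1
    simp only [mul_inv_cancel_right, mul_inv_cancel] at h1
    exact ⟨_, h1⟩
  · exfalso
    have hch : l.IsChain (Adj s (T.erase i)) := by
      rw [List.isChain_iff_forall_rel_of_append_cons_cons]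
      intro a b l₁ l₂ e
      have h1 := p.chain
      rw [e, List.isChain_append_cons_cons] at h1
      obtain ⟨j, hj, e'⟩ := h1.2.1
      refine ⟨j, ?_, e'⟩
      rw [Finset.mem_erase]
      refine ⟨?_, hj⟩
      rintro rfl
      exact h ⟨l₁, l₂, a, by rw [e, e']⟩
    have hhead := p.head
    obtain ⟨m, rfl⟩ : ∃ m, l = x :: m := by
      match l, hhead with
      | [], h => simp at h
      | a :: m, h => simp at h; exact ⟨m, by rw [h]⟩
    have hx : x ∈ para s T := (p.mem x).1 (by simp)
    have h2 : s i * x ∈ x :: m := (p.mem _).2 (mul_mem (gen_mem hi) hx)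
    have h3 := chain_mem _ _ _ hch _ h2
    rw [mul_inv_cancel_right] at h3
    exact indep i _ (by simp) h3

lemma extend [DecidableEq B] [Finite W] (hs : ∀ i, s i * s i = 1) {k : B}
    (hk : ∀ i ∈ T', ∀ j ∈ T', i ≠ j → Commute (s k) (s i) ∨ Commute (s k) (s j))
    (hP : ∀ i ∈ T', ∃ l', PathOn s T' (para s T') (s i) 1 l')
    (hl : 3 ≤ l.length)
    (p : PathOn s T' (para s T') x y l) (hc : Adj s T' y x) :
    ∃ x y l', PathOn s (insert k T') (para s (insert k T')) x y l' ∧ Adj s (insert k T') y x := by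
  have := Fintype.ofFinite W
  set T := insert k T' with hT
  have hsub : T' ⊆ T := Finset.subset_insert _ _
  have hkT : k ∈ T := Finset.mem_insert_self _ _
  have hpara : para s T' ≤ para s T :=
    Subgroup.closure_mono (Set.image_mono (by exact_mod_cast hsub))
  by_contra hcon
  have key : ∀ n : ℕ, ∃ (U : Set W) (x y : W) (l : List W), PathOn s T U x y l ∧ Adj s T y x ∧
      U ⊆ para s T ∧ (∀ h ∈ para s T', ∀ u ∈ U, h * u ∈ U) ∧ 3 ≤ l.length ∧ n ≤ l.length := by
    intro n
    induction n with
    | zero =>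
      exact ⟨_, x, y, l, p.mono hsub, hc.mono hsub, hpara, fun h hh u hu => mul_mem hh hu, hl,
        Nat.zero_le _⟩
    | succ n ih =>
      obtain ⟨U, x, y, l, p, hc, hU, hH, h3, hn⟩ := ih
      have hxU : x ∈ U := (p.mem x).1 (List.mem_of_head? p.head)
      have hne : U ≠ para s T := by
        rintro rfl
        exact hcon ⟨x, y, l, p, hc⟩
      obtain ⟨a, ha, hka⟩ : ∃ a ∈ U, s k * a ∉ U := by
        by_contra! hall
        apply hne
        apply Set.Subset.antisymm hU
        have hstab : ∀ g ∈ para s T, ∀ u ∈ U, g * u ∈ U := by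
          have hgen : ∀ i ∈ T, ∀ u ∈ U, s i * u ∈ U := by
            intro i hi
            rcases Finset.mem_insert.1 hi with rfl | hi
            · exact hall
            · exact hH _ (gen_mem hi)
          intro g hg u hu
          induction hg using Subgroup.closure_induction_left with
          | one => simpa using hu
          | mul_left a ha b hb ih =>
            obtain ⟨q, hq, rfl⟩ := ha
            rw [mul_assoc]
            exact hgen q hq _ ih
          | inv_mul_cancel a ha b hb ih =>
            obtain ⟨q, hq, rfl⟩ := ha
            rw [inv_eq_of_mul_eq_one_right (hs q), mul_assoc]
            exact hgen q hq _ ih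
        intro g hg
        have := hstab (g * x⁻¹) (mul_mem hg (inv_mem (hU hxU))) x hxU
        simpa using this
      obtain ⟨b, c, l₁, l₂, hbc, ⟨i, hi, hab⟩, ⟨j, hj, hca⟩, p₁, p₂, hl₁, hl₂⟩ :=
        p.neighbours hc h3 ha
      have hbU : b ∈ U := (p₁.mem b).1 (List.mem_of_head? p₁.head)
      have hcU : c ∈ U := (p₂.mem c).1 (List.mem_of_getLast? p₂.last)
      have hca' : c = s j * a := by rw [hca, ← mul_assoc, hs, one_mul]
      have hiT : i ∈ T' := by
        rcases Finset.mem_insert.1 hi with rfl | h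
        · rw [hab] at hbU; exact absurd hbU hka
        · exact h
      have hjT : j ∈ T' := by
        rcases Finset.mem_insert.1 hj with rfl | h
        · rw [hca'] at hcU; exact absurd hcU hka
        · exact h
      have hij : i ≠ j := by
        rintro rfl; exact hbc (hab.trans hca'.symm)
      -- the coset to be added
      have haP : s k * a ∈ para s T := mul_mem (gen_mem hkT) (hU ha)
      have fin : ∀ g h : W, g = h * (s k * a) → h ∈ para s T' →
          Disjoint U {z | z * g⁻¹ ∈ (para s T' : Set W)} ∧
          (U ∪ {z | z * g⁻¹ ∈ (para s T' : Set W)} ⊆ para s T) ∧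
          (∀ h ∈ para s T', ∀ u ∈ U ∪ {z | z * g⁻¹ ∈ (para s T' : Set W)},
            h * u ∈ U ∪ {z | z * g⁻¹ ∈ (para s T' : Set W)}) := by
        rintro g h rfl hh
        have hg : h * (s k * a) ∈ para s T := mul_mem (hpara hh) haP
        refine ⟨?_, ?_, ?_⟩
        · rw [Set.disjoint_left]
          intro z hz hz'
          have h1 : z * (h * (s k * a))⁻¹ ∈ para s T' := hz'
          have h2 := hH _ (mul_mem (inv_mem hh) (inv_mem h1)) z hz
          apply hka
          convert h2 using 1
          group
        · rintro z (hz | hz)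
          · exact hU hz
          · have h1 : z * (h * (s k * a))⁻¹ ∈ para s T' := hz
            exact (Subgroup.mul_mem_cancel_right _ (inv_mem hg)).1 (hpara h1)
        · rintro f hf u (hu | hu)
          · exact Or.inl (hH f hf u hu)
          · right
            have h1 : u * (h * (s k * a))⁻¹ ∈ para s T' := hu
            change f * u * (h * (s k * a))⁻¹ ∈ para s T'
            rw [mul_assoc]
            exact mul_mem hf h1
      have hlen : ∀ {V : Set W} {x y l}, PathOn s T V x y l → 1 ≤ l.length := by
        intro V x y l q
        have := List.mem_of_head? q.head
        exact List.length_pos_of_mem this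
      rcases hk i hiT j hjT hij with hcom | hcom
      · obtain ⟨d, hd⟩ := hP i hiT
        have q := (hd.translate (s i * (s k * a))).mono hsub
        obtain ⟨f1, f2, f3⟩ := fin _ (s i) rfl (gen_mem hiT)
        have e : s i * (s i * (s k * a)) = s k * a := by rw [← mul_assoc, hs, one_mul]
        rw [e, one_mul] at q
        have r := p₁.append q f1 ⟨k, hkT, rfl⟩
        refine ⟨_, _, _, _, r, ⟨k, hkT, ?_⟩, f2, f3, ?_, ?_⟩
        · rw [hab, ← mul_assoc (s i), ← hcom.eq, mul_assoc, ← mul_assoc (s k), hs, one_mul]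
        · rw [List.length_append]; omega
        · have := hlen q
          rw [List.length_append]; omega
      · obtain ⟨d, hd⟩ := hP j hjT
        have q := (hd.translate (s k * a)).mono hsub
        obtain ⟨f1, f2, f3⟩ := fin _ 1 (one_mul _).symm (one_mem _)
        rw [one_mul] at q
        have r := p₂.append q f1 ⟨k, hkT, by
          rw [hca', ← mul_assoc, ← mul_assoc, hcom.eq]⟩
        refine ⟨_, _, _, _, r, ⟨k, hkT, ?_⟩, f2, f3, ?_, ?_⟩
        · rw [← mul_assoc, hs, one_mul]
        · rw [List.length_append]; omega
        · have := hlen q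
          rw [List.length_append]; omega
  obtain ⟨U, x, y, l, p, -, -, -, -, h⟩ := key (Fintype.card W + 1)
  have := p.nodup.length_le_card
  omega

lemma single (hs : ∀ i, s i * s i = 1) (hs1 : ∀ i, s i ≠ 1) (i : B) :
    PathOn s {i} (para s {i}) (s i) 1 [s i, 1] := by
  refine ⟨by simp [hs1], ?_, ?_, by simp, by simp⟩
  · intro z
    simp only [para, Finset.coe_singleton, Set.image_singleton, SetLike.mem_coe,
      Subgroup.mem_closure_singleton]
    constructor
    · intro h
      simp at h
      rcases h with rfl | rfl
      · exact ⟨1, by simp⟩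
      · exact ⟨0, by simp⟩
    · rintro ⟨n, rfl⟩
      rcases Int.even_or_odd' n with ⟨m, rfl | rfl⟩
      · have : (s i) ^ (2 : ℤ) = 1 := by rw [zpow_two, hs]
        simp [zpow_mul, this]
      · have : (s i) ^ (2 : ℤ) = 1 := by rw [zpow_two, hs]
        simp [zpow_add, zpow_mul, this]
  · simp only [List.isChain_pair]
    exact ⟨i, by simp, by rw [hs]⟩

lemma dihedral [DecidableEq B] [Finite W] (hs : ∀ i, s i * s i = 1)
    (par : W →* ℤˣ) (hpar : ∀ i, par (s i) = -1) (i j : B) :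
    ∃ x y l', PathOn s {i, j} (para s {i, j}) x y l' ∧ Adj s {i, j} y x := by
  set r := s j * s i with hr
  set m := orderOf r with hm
  have hm0 : 0 < m := orderOf_pos r
  have hrm : r ^ m = 1 := pow_orderOf_eq_one r
  let f : ℕ → W := fun n => if Even n then r ^ (n / 2) else s i * r ^ (n / 2)
  have f_even : ∀ n, f (2 * n) = r ^ n := fun n => by simp [f]
  have f_odd : ∀ n, f (2 * n + 1) = s i * r ^ n := fun n => by
    simp [f]; congr 1; omega
  have f_adj : ∀ n, Adj s {i, j} (f n) (f (n + 1)) := by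
    intro n
    rcases Nat.even_or_odd' n with ⟨k, rfl | rfl⟩
    · exact ⟨i, by simp, by rw [f_even, f_odd]⟩
    · refine ⟨j, by simp, ?_⟩
      rw [f_odd, show 2 * k + 1 + 1 = 2 * (k + 1) by ring, f_even, pow_succ', hr, mul_assoc]
  have hpr : ∀ n, par (r ^ n) = 1 := fun n => by simp [hr, hpar]
  have f_inj : ∀ a < 2 * m, ∀ b < 2 * m, f a = f b → a = b := by
    intro a ha b hb hab
    rcases Nat.even_or_odd' a with ⟨a, rfl | rfl⟩ <;> rcases Nat.even_or_odd' b with ⟨b, rfl | rfl⟩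
    · rw [f_even, f_even] at hab
      rw [pow_injOn_Iio_orderOf (x := r) (show a < orderOf r by omega)
        (show b < orderOf r by omega) hab]
    · rw [f_even, f_odd] at hab
      have := congrArg par hab
      rw [map_mul, hpr, hpr, hpar] at this
      simp at this
    · rw [f_even, f_odd] at hab
      have := congrArg par hab
      rw [map_mul, hpr, hpr, hpar] at this
      simp at this
    · rw [f_odd, f_odd] at hab
      have hab := mul_left_cancel hab
      rw [pow_injOn_Iio_orderOf (x := r) (show a < orderOf r by omega)
        (show b < orderOf r by omega) hab]
  have f_red : ∀ n, ∃ k < 2 * m, f k = f n := by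
    intro n
    rcases Nat.even_or_odd' n with ⟨a, rfl | rfl⟩
    · refine ⟨2 * (a % m), ?_, ?_⟩
      · have := Nat.mod_lt a hm0
        omega
      · rw [f_even, f_even, hm, pow_mod_orderOf]
    · refine ⟨2 * (a % m) + 1, ?_, ?_⟩
      · have := Nat.mod_lt a hm0
        omega
      · rw [f_odd, f_odd, hm, pow_mod_orderOf]
  have hi : s i ∈ para s {i, j} := gen_mem (by simp)
  have hj : s j ∈ para s {i, j} := gen_mem (by simp)
  have f_mem : ∀ n, f n ∈ para s {i, j} := by
    intro n
    rcases Nat.even_or_odd' n with ⟨a, rfl | rfl⟩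
    · rw [f_even]; exact pow_mem (mul_mem hj hi) _
    · rw [f_odd]; exact mul_mem hi (pow_mem (mul_mem hj hi) _)
  have hjr : ∀ k, s j * r ^ (k + 1) = s i * r ^ k := by
    intro k
    rw [pow_succ', hr, ← mul_assoc, ← mul_assoc, hs, one_mul]
  have gen_step : ∀ q ∈ ({i, j} : Finset B), ∀ n, ∃ k, f k = s q * f n := by
    intro q hq n
    rw [Finset.mem_insert, Finset.mem_singleton] at hq
    rcases hq with rfl | rfl
    · rcases Nat.even_or_odd' n with ⟨a, rfl | rfl⟩
      · exact ⟨2 * a + 1, by rw [f_even, f_odd]⟩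
      · exact ⟨2 * a, by rw [f_even, f_odd, ← mul_assoc, hs, one_mul]⟩
    · rcases Nat.even_or_odd' n with ⟨a, rfl | rfl⟩
      · refine ⟨2 * (a + (m - 1)) + 1, ?_⟩
        rw [f_even, f_odd, ← hjr, show a + (m - 1) + 1 = a + m by omega, pow_add, hrm, mul_one]
      · refine ⟨2 * (a + 1), ?_⟩
        rw [f_even, f_odd, pow_succ', hr, mul_assoc]
  have f_surj : ∀ z ∈ para s {i, j}, ∃ k, f k = z := by
    intro z hz
    induction hz using Subgroup.closure_induction_left with
    | one => exact ⟨0, by simp [f]⟩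
    | mul_left a ha b hb ih =>
      obtain ⟨q, hq, rfl⟩ := ha
      obtain ⟨n, rfl⟩ := ih
      exact gen_step q hq n
    | inv_mul_cancel a ha b hb ih =>
      obtain ⟨q, hq, rfl⟩ := ha
      obtain ⟨n, rfl⟩ := ih
      rw [inv_eq_of_mul_eq_one_right (hs q)]
      exact gen_step q hq n
  refine ⟨f 0, f (2 * m - 1), (List.range (2 * m)).map f, ⟨?_, ?_, ?_, ?_, ?_⟩, ?_⟩
  · refine List.Nodup.map_on ?_ List.nodup_range
    intro a ha b hb
    exact f_inj a (List.mem_range.1 ha) b (List.mem_range.1 hb)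
  · intro z
    simp only [List.mem_map, List.mem_range, SetLike.mem_coe]
    constructor
    · rintro ⟨a, -, rfl⟩; exact f_mem a
    · intro hz
      obtain ⟨n, rfl⟩ := f_surj z hz
      exact f_red n
  · rw [List.isChain_iff_getElem]
    intro k hk
    simpa using f_adj k
  · rw [List.head?_map, List.head?_range]
    simp [hm0.ne']
  · rw [List.getLast?_map, List.getLast?_range]
    simp [hm0.ne']
  · have h1 := f_adj (2 * m - 1)
    rw [show 2 * m - 1 + 1 = 2 * m by omega, f_even, hrm] at h1
    have h0 : f 0 = 1 := by simp [f]
    rwa [h0]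

lemma all_paths [DecidableEq B] [Finite W] (hs : ∀ i, s i * s i = 1)
    (indep : ∀ (i : B) (T : Set B), i ∉ T → s i ∉ Subgroup.closure (s '' T))
    (par : W →* ℤˣ) (hpar : ∀ i, par (s i) = -1)
    (leaf : ∀ T : Finset B, T.Nonempty → ∃ k ∈ T, ∀ i ∈ T.erase k, ∀ j ∈ T.erase k, i ≠ j →
      Commute (s k) (s i) ∨ Commute (s k) (s j)) (T : Finset B) :
    ∀ i ∈ T, ∃ l, PathOn s T (para s T) (s i) 1 l := by
  have hs1 : ∀ i, s i ≠ 1 := fun i h => indep i ∅ (by simp) (by rw [h]; exact one_mem _)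
  have hinj : ∀ i j, i ≠ j → s i ≠ s j := fun i j hij h =>
    indep i {j} (by simpa using hij) (by rw [h]; exact Subgroup.subset_closure ⟨j, by simp, rfl⟩)
  induction T using Finset.strongInduction with
  | H T ih =>
    intro i hi
    obtain ⟨k, hk, hleaf⟩ := leaf T ⟨i, hi⟩
    have hins := Finset.insert_erase hk
    rcases Finset.eq_empty_or_nonempty (T.erase k) with h0 | ⟨a, ha⟩
    · rw [h0] at hins
      have hT : T = {k} := by rw [← hins]; rfl
      subst hT
      rw [Finset.mem_singleton] at hi
      subst hi
      exact ⟨_, single hs hs1 i⟩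
    suffices ∃ x y l', PathOn s T (para s T) x y l' ∧ Adj s T y x by
      obtain ⟨x, y, l', h1, h2⟩ := this
      exact labels indep h1 h2 hi
    by_cases h1 : T.erase k = {a}
    · rw [h1] at hins
      rw [← hins]
      exact dihedral hs par hpar k a
    obtain ⟨b, hb, hba⟩ : ∃ b ∈ T.erase k, b ≠ a := by
      by_contra! hh
      exact h1 (Finset.eq_singleton_iff_unique_mem.2 ⟨ha, hh⟩)
    have hP := ih (T.erase k) (Finset.erase_ssubset hk)
    obtain ⟨l, hl⟩ := hP a ha
    rw [← hins]
    refine extend hs hleaf hP ?_ hl ⟨a, ha, by simp⟩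
    have hsubl : [1, s a, s b] ⊆ l := by
      intro z hz
      rw [hl.mem]
      simp at hz
      rcases hz with rfl | rfl | rfl
      · exact one_mem _
      · exact gen_mem ha
      · exact gen_mem hb
    have hnd : [1, s a, s b].Nodup := by
      simp [(hs1 a).symm, (hs1 b).symm, hinj a b hba.symm]
    exact (hnd.subperm hsubl).length_le
end
end CoxHam

/-- For a finite Coxeter system `(W, S)` over a nonempty finite index set `B`, the
Cayley graph of `(W, S)` has a Hamilton circuit passing through any prescribed
vertex along an edge with any prescribed label: for every `v ∈ W` and `i ∈ B` there
are a Hamiltonian circuit map `θ : ℤ/kℤ → W` (`k = |W|`) and a `t` with `θ(t) = v`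
and `θ(t+1) = sᵢ · v`. -/
theorem exists_hamiltonianCircuitMap_through_vertex_with_label
    {B W : Type*} [Fintype B] [Nonempty B] [Group W] [Finite W]
    (M : CoxeterMatrix B) (cs : CoxeterSystem M W) :
    ∀ (v : W) (i : B), ∃ θ : ZMod (Nat.card W) → W,
      Function.Bijective θ ∧
      (∀ t, θ (t + 1) * (θ t)⁻¹ ∈ Set.range cs.simple) ∧
      ∃ t, θ t = v ∧ θ (t + 1) = cs.simple i * v := by
  classical
  intro v i
  have leaf : ∀ T : Finset B, T.Nonempty → ∃ k ∈ T, ∀ i ∈ T.erase k, ∀ j ∈ T.erase k, i ≠ j →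
      Commute (cs.simple k) (cs.simple i) ∨ Commute (cs.simple k) (cs.simple j) := by
    intro T hT
    obtain ⟨k, hk, h⟩ := CoxHam.exists_leaf cs T hT
    refine ⟨k, hk, fun i hi j hj hij => ?_⟩
    rw [Finset.mem_erase] at hi hj
    have comm : ∀ i, M k i = 2 → Commute (cs.simple k) (cs.simple i) := by
      intro i h2
      have h3 := cs.simple_mul_simple_pow k i
      rw [h2, pow_two] at h3
      have h4 := eq_inv_of_mul_eq_one_left h3
      rw [mul_inv_rev, cs.inv_simple, cs.inv_simple] at h4
      exact h4
    by_contra! hcon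
    exact hij (h i hi.2 j hj.2 hi.1 hj.1 (fun e => hcon.1 (comm i e)) (fun e => hcon.2 (comm j e)))
  have hlift : M.IsLiftable (fun _ : B => (-1 : ℤˣ)) := by
    intro a b
    simp
  obtain ⟨l₀, p₀⟩ := CoxHam.all_paths (s := cs.simple) cs.simple_mul_simple_self
    (fun i T hi => CoxHam.simple_notMem_closure cs i T hi)
    (cs.lift ⟨_, hlift⟩) (fun i => cs.lift_apply_simple hlift i) leaf Finset.univ i
    (Finset.mem_univ i)
  have p := p₀.translate v
  generalize l₀.map (· * v) = l at p
  rw [one_mul] at p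
  have hall : ∀ z, z ∈ l := by
    intro z
    rw [p.mem]
    change z * v⁻¹ ∈ Subgroup.closure _
    rw [Finset.coe_univ, Set.image_univ, cs.subgroup_closure_range_simple]
    trivial
  have hlen : l.length = Nat.card W := by
    have := Fintype.ofFinite W
    rw [Nat.card_eq_fintype_card, ← List.toFinset_card_of_nodup p.nodup, ← Finset.card_univ]
    congr 1
    ext z
    simp [hall]
  have hpos : 0 < l.length := List.length_pos_of_mem (hall 1)
  rw [← hlen]
  generalize hn : l.length = n at *
  obtain ⟨m, rfl⟩ : ∃ m, n = m + 1 := ⟨n - 1, by omega⟩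
  have hlt : ∀ t : ZMod (m + 1), t.val < l.length := fun t => by
    rw [hn]; exact ZMod.val_lt t
  have hm : m < l.length := by omega
  have hlast : l[m] = v := by
    have := p.last
    rw [List.getLast?_eq_getElem?, hn, Nat.add_sub_cancel, List.getElem?_eq_getElem hm] at this
    exact Option.some.inj this
  have hfirst : l[0]'(by omega) = cs.simple i * v := by
    have := p.head
    rw [List.head?_eq_getElem?, List.getElem?_eq_getElem (by omega)] at this
    exact Option.some.inj this
  have hsucc : ∀ t : ZMod (m + 1), (t.val < m ∧ (t + 1).val = t.val + 1) ∨
      (t.val = m ∧ (t + 1).val = 0) := by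
    intro t
    have h1 : (t + 1).val = (t.val + 1) % (m + 1) := by
      rw [ZMod.val_add, ZMod.val_one_eq_one_mod, Nat.add_mod_mod]
    have h2 := ZMod.val_lt t
    rcases Nat.lt_or_ge t.val m with h | h
    · left
      exact ⟨h, by rw [h1, Nat.mod_eq_of_lt (by omega)]⟩
    · right
      have : t.val = m := by omega
      exact ⟨this, by rw [h1, this, Nat.mod_self]⟩
  refine ⟨fun t => l[t.val]'(hlt t), ⟨?_, ?_⟩, ?_, (m : ZMod (m + 1)), ?_⟩
  · intro a b hab
    exact ZMod.val_injective _ ((p.nodup.getElem_inj_iff).1 hab)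
  · intro z
    obtain ⟨k, hk, rfl⟩ := List.getElem_of_mem (hall z)
    refine ⟨(k : ZMod (m + 1)), ?_⟩
    have : ((k : ZMod (m + 1))).val = k := ZMod.val_cast_of_lt (by omega)
    simp only [this]
  · intro t
    rcases hsucc t with ⟨h1, h2⟩ | ⟨h1, h2⟩
    · simp only [h2]
      have hch := p.chain
      rw [List.isChain_iff_getElem] at hch
      obtain ⟨j, -, hj⟩ := hch t.val (by omega)
      rw [hj]
      exact ⟨j, by simp⟩
    · simp only [h2, h1, hfirst, hlast]
      exact ⟨i, by simp⟩
  · have hv : ((m : ZMod (m + 1))).val = m := ZMod.val_cast_of_lt (by omega)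
    rcases hsucc (m : ZMod (m + 1)) with ⟨h1, h2⟩ | ⟨h1, h2⟩
    · omega
    · simp only [h2, h1, hfirst, hlast]
      exact ⟨trivial, trivial⟩
end

section
/- Let Γ be a simple graph on a vertex type V, let m, n be positive integers, and let θ₁ : ℤ/mℤ → V and θ₂ : ℤ/nℤ → V be injective maps with disjoint images such that Γ.Adj (θ₁ t) (θ₁ (t+1)) for all t ∈ ℤ/mℤ and Γ.Adj (θ₂ t) (θ₂ (t+1)) for all t ∈ ℤ/nℤ (so θ₁ and θ₂ trace vertex-disjoint cycles in Γ). Suppose there exist t₁ ∈ ℤ/mℤ and t₂ ∈ ℤ/nℤ with Γ.Adj (θ₁ t₁) (θ₂ t₂) and Γ.Adj (θ₁ (t₁+1)) (θ₂ (t₂+1)). Then there exists an injective map θ : ℤ/(m+n)ℤ → V whose image is the union of the images of θ₁ and θ₂ and such that Γ.Adj (θ t) (θ (t+1)) for all t ∈ ℤ/(m+n)ℤ; i.e. the two cycles can be joined into a single cycle through all their vertices. -/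
/-- Joining two vertex-disjoint cycles of a simple graph into a single cycle: if
`θ₁ : ℤ/mℤ → V` and `θ₂ : ℤ/nℤ → V` trace vertex-disjoint cycles in `Γ` and there
are `t₁, t₂` with `θ₁ t₁ ~ θ₂ t₂` and `θ₁ (t₁+1) ~ θ₂ (t₂+1)`, then there is a single
cycle `θ : ℤ/(m+n)ℤ → V` through exactly the vertices of the two cycles. -/
theorem simpleGraph_join_two_cycles
    {V : Type*} (Γ : SimpleGraph V) (m n : ℕ) (hm : 0 < m) (hn : 0 < n)
    (θ₁ : ZMod m → V) (θ₂ : ZMod n → V)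
    (h₁inj : Function.Injective θ₁) (h₂inj : Function.Injective θ₂)
    (hdisj : Disjoint (Set.range θ₁) (Set.range θ₂))
    (h₁adj : ∀ t, Γ.Adj (θ₁ t) (θ₁ (t + 1)))
    (h₂adj : ∀ t, Γ.Adj (θ₂ t) (θ₂ (t + 1)))
    (t₁ : ZMod m) (t₂ : ZMod n)
    (hj₁ : Γ.Adj (θ₁ t₁) (θ₂ t₂)) (hj₂ : Γ.Adj (θ₁ (t₁ + 1)) (θ₂ (t₂ + 1))) :
    ∃ θ : ZMod (m + n) → V, Function.Injective θ ∧
      Set.range θ = Set.range θ₁ ∪ Set.range θ₂ ∧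
      ∀ t, Γ.Adj (θ t) (θ (t + 1)) := by
  haveI : NeZero m := ⟨hm.ne'⟩
  haveI : NeZero n := ⟨hn.ne'⟩
  haveI : NeZero (m + n) := ⟨by omega⟩
  have hne : ∀ x y, θ₁ x ≠ θ₂ y := fun x y h =>
    Set.disjoint_left.mp hdisj ⟨x, rfl⟩ ⟨y, h.symm⟩
  have hcast : ∀ (N : ℕ) (a b : ℕ), a < N → b < N → (a : ZMod N) = b → a = b := by
    intro N a b ha hb h
    have := congrArg ZMod.val h
    rwa [ZMod.val_natCast_of_lt ha, ZMod.val_natCast_of_lt hb] at this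
  obtain ⟨f, hf⟩ : ∃ f : ℕ → V, f = fun k => if k < m then θ₁ (t₁ + 1 + (k : ZMod m))
      else θ₂ (t₂ - ((k - m : ℕ) : ZMod n)) := ⟨_, rfl⟩
  have f1 : ∀ k, k < m → f k = θ₁ (t₁ + 1 + (k : ZMod m)) := by
    intro k hk; simp [hf, hk]
  have f2 : ∀ k, f (m + k) = θ₂ (t₂ - (k : ZMod n)) := by
    intro k; simp [hf]
  have split : ∀ k, k < m + n → k < m ∨ ∃ j, j < n ∧ k = m + j := by
    intro k hk
    by_cases h : k < m
    · exact Or.inl h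
    · exact Or.inr ⟨k - m, by omega, by omega⟩
  refine ⟨fun t => f t.val, ?_, ?_, ?_⟩
  · intro x y hxy
    apply ZMod.val_injective
    simp only at hxy
    rcases split _ x.val_lt with hx | ⟨i, hi, hx⟩ <;> rcases split _ y.val_lt with hy | ⟨j, hj, hy⟩
    · rw [f1 _ hx, f1 _ hy] at hxy
      exact hcast m _ _ hx hy (add_left_cancel (h₁inj hxy))
    · rw [f1 _ hx, hy, f2] at hxy
      exact (hne _ _ hxy).elim
    · rw [f1 _ hy, hx, f2] at hxy
      exact (hne _ _ hxy.symm).elim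
    · rw [hx, hy, f2, f2] at hxy
      rw [hx, hy, hcast n _ _ hi hj (sub_right_injective (h₂inj hxy))]
  · ext v
    constructor
    · rintro ⟨t, rfl⟩
      simp only
      rcases split _ t.val_lt with hx | ⟨i, hi, hx⟩
      · rw [f1 _ hx]; exact Or.inl ⟨_, rfl⟩
      · rw [hx, f2]; exact Or.inr ⟨_, rfl⟩
    · rintro (⟨x, rfl⟩ | ⟨x, rfl⟩)
      · have hk := (x - (t₁ + 1)).val_lt
        refine ⟨((x - (t₁ + 1)).val : ℕ), ?_⟩
        simp only
        rw [ZMod.val_natCast_of_lt (by omega), f1 _ hk, ZMod.natCast_zmod_val, add_sub_cancel]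
      · have hk := (t₂ - x).val_lt
        refine ⟨((m + (t₂ - x).val : ℕ) : ZMod (m + n)), ?_⟩
        simp only
        rw [ZMod.val_natCast_of_lt (by omega), f2, ZMod.natCast_zmod_val, sub_sub_cancel]
  · intro t
    have hv : (t + 1).val = (t.val + 1) % (m + n) := by
      conv_lhs => rw [← ZMod.natCast_zmod_val t]
      rw [← Nat.cast_one, ← Nat.cast_add, ZMod.val_natCast]
    simp only
    rw [hv]
    rcases split _ t.val_lt with hx | ⟨i, hi, hx⟩
    · rw [Nat.mod_eq_of_lt (by omega), f1 _ hx]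
      by_cases h : t.val + 1 < m
      · rw [f1 _ h, Nat.cast_add, Nat.cast_one, ← add_assoc]
        exact h₁adj _
      · have h' : t.val + 1 = m := by omega
        have h0 : (t.val : ZMod m) + 1 = 0 := by
          have := congrArg (Nat.cast : ℕ → ZMod m) h'
          simpa only [Nat.cast_add, Nat.cast_one, ZMod.natCast_self] using this
        have e : t₁ + 1 + (t.val : ZMod m) = t₁ := by
          rw [add_assoc, add_comm 1, h0, add_zero]
        rw [e, h', ← add_zero m, f2]
        simpa using hj₁
    · rw [hx]
      by_cases h : i + 1 < n
      · rw [Nat.mod_eq_of_lt (by omega), add_assoc, f2, f2]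
        have := h₂adj (t₂ - ((i + 1 : ℕ) : ZMod n))
        have e : t₂ - ((i + 1 : ℕ) : ZMod n) + 1 = t₂ - (i : ZMod n) := by push_cast; ring
        rw [e] at this
        exact this.symm
      · have h' : i + 1 = n := by omega
        have h0 : (i : ZMod n) + 1 = 0 := by
          have := congrArg (Nat.cast : ℕ → ZMod n) h'
          simpa only [Nat.cast_add, Nat.cast_one, ZMod.natCast_self] using this
        have e : t₂ - (i : ZMod n) = t₂ + 1 := by
          rw [eq_neg_of_add_eq_zero_left h0]; ring
        rw [f2, e, add_assoc, h', Nat.mod_self, f1 _ hm]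
        simpa using hj₂.symm
end
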